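/- Let T be a tight tour for the HCPP instance I_φ=(G,ω,𝒫,≺) produced by the construction from a 3-CNF formula φ, and let M = E(T) \ E be the multiset of edges that T traverses additionally to E (with the multiplicity of additional traversals). Then: (i) M ⊆ E_0 and M is a perfect matching on the vertex set V_FT ∪ V_C (in particular M contains each edge at most once); (ii) each edge in M has at least one endpoint in V_FT; and (iii) the multigraph ⟨G⟩((E \ E_0) ∪ M) is connected. -/

import Mathlib

namespace HCPPFormal

variable {V : Type} [DecidableEq V]

/-- The degree of a vertex in a multigraph given as a multiset of edges
(loops count twice, multiplicities are counted). -/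
def mDeg (M : Multiset (Sym2 V)) (v : V) : ℕ :=
  (M.map fun e => if e = Sym2.diag v then 2 else if v ∈ e then 1 else 0).sum

/-- The vertex set of the multigraph induced by a multiset of edges. -/
def mVerts (M : Multiset (Sym2 V)) : Set V := {v | ∃ e ∈ M, v ∈ e}

/-- Adjacency in the multigraph induced by a multiset of edges. -/
def mAdj (M : Multiset (Sym2 V)) (a b : V) : Prop := s(a, b) ∈ M

/-- The multigraph induced by a multiset of edges is connected. -/
def mConnected (M : Multiset (Sym2 V)) : Prop :=
  ∀ u ∈ mVerts M, ∀ v ∈ mVerts M, Relation.ReflTransGen (mAdj M) u v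

/-- The list of edges traversed by a walk, given as its list of vertices. -/
def walkEdgeList (w : List V) : List (Sym2 V) :=
  (w.zip w.tail).map fun p => s(p.1, p.2)

/-- The multiset of edges traversed by a walk (with multiplicities). -/
def walkEdges (w : List V) : Multiset (Sym2 V) :=
  (walkEdgeList w : Multiset (Sym2 V))

/-- The weight of a multiset of edges. -/
def mWeight (ω : Sym2 V → ℕ) (M : Multiset (Sym2 V)) : ℕ := (M.map ω).sum

/-- The weight of a walk. -/
def wWeight (ω : Sym2 V → ℕ) (w : List V) : ℕ := mWeight ω (walkEdges w)

/-- A multiset `M` of edges is a perfect matching on the vertex set `U`: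
it is a set of pairwise vertex-disjoint non-loop edges
whose endpoints are exactly the vertices of `U`. -/
def IsPerfectMatchingOn (M : Multiset (Sym2 V)) (U : Set V) : Prop :=
  M.Nodup ∧ (∀ e ∈ M, ¬ e.IsDiag) ∧
  (∀ e ∈ M, ∀ e' ∈ M, e ≠ e' → ∀ v : V, v ∈ e → v ∉ e') ∧
  mVerts M = U



/-- Vertices of the graph constructed from a 3-CNF formula:
`t i l`, `z i l`, `f i l` are the vertices `t_i^ℓ`, `z_i^ℓ`, `f_i^ℓ`;
`cs` is the vertex `c*`; `c1 j`, `c2 j` are `c_j¹`, `c_j²`;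
`a i j`, `b i j` are the auxiliary vertices `a_{ij}`, `b_{ij}`. -/
inductive V3 : Type where
  | t (i l : ℕ) : V3
  | z (i l : ℕ) : V3
  | f (i l : ℕ) : V3
  | cs : V3
  | c1 (j : ℕ) : V3
  | c2 (j : ℕ) : V3
  | a (i j : ℕ) : V3
  | b (i j : ℕ) : V3
deriving DecidableEq

/-- A 3-CNF formula with variables `0, …, n-1` and clauses `0, …, m-1`;
the pair `(i, true)` represents the literal `x_i` and `(i, false)` represents `¬x_i`.
Each clause has at most three literals, and no clause contains
both a variable and its negation. -/
structure CNF3 : Type where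
  n : ℕ
  m : ℕ
  clause : ℕ → Finset (ℕ × Bool)
  size_le : ∀ j < m, (clause j).card ≤ 3
  var_lt : ∀ j < m, ∀ p ∈ clause j, p.1 < n
  no_taut : ∀ j < m, ∀ i : ℕ, ¬ ((i, true) ∈ clause j ∧ (i, false) ∈ clause j)

/-- The clauses containing the variable `x_i` (positively or negatively). -/
def occ (φ : CNF3) (i : ℕ) : Finset ℕ :=
  (Finset.range φ.m).filter fun j => (i, true) ∈ φ.clause j ∨ (i, false) ∈ φ.clause j

/-- `μ φ i` is the number of clauses containing `x_i` or `¬x_i`. -/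
def μ (φ : CNF3) (i : ℕ) : ℕ := (occ φ i).card

/-- `posOf φ i j` is the (1-based) position `ℓ` such that clause `j` is
the `ℓ`-th clause containing `x_i` or `¬x_i`. -/
def posOf (φ : CNF3) (i j : ℕ) : ℕ := ((occ φ i).filter fun j' => j' ≤ j).card

/-- The edges of the cycle `X_i`. -/
def Xedges (φ : CNF3) (i : ℕ) : Finset (Sym2 V3) :=
  ((Finset.Ico 1 (6 * μ φ i)).image fun l => s(V3.t i l, V3.t i (l + 1))) ∪
  ((Finset.Ico 1 (6 * μ φ i)).image fun l => s(V3.f i l, V3.f i (l + 1))) ∪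
  {s(V3.t i (6 * μ φ i), V3.f i (6 * μ φ i)), s(V3.f i 1, V3.t i 1)}

/-- The edges of the cycle `Y_{i i'}` where `i' = (i mod n) + 1` (0-based: `(i+1) % n`). -/
def Yedges (φ : CNF3) (i : ℕ) : Finset (Sym2 V3) :=
  {s(V3.t i (6 * μ φ i), V3.f ((i + 1) % φ.n) 1),
   s(V3.f ((i + 1) % φ.n) 1, V3.f i (6 * μ φ i)),
   s(V3.f i (6 * μ φ i), V3.t ((i + 1) % φ.n) 1),
   s(V3.t ((i + 1) % φ.n) 1, V3.t i (6 * μ φ i))}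

/-- The edges of the cycle `Z_{ij}` (for a positive occurrence of `x_i` in clause `C_j`). -/
def Zedges (φ : CNF3) (i j : ℕ) : Finset (Sym2 V3) :=
  {s(V3.t i (6 * posOf φ i j - 3), V3.c1 j),
   s(V3.c1 j, V3.a i j),
   s(V3.a i j, V3.c2 j),
   s(V3.c2 j, V3.t i (6 * posOf φ i j - 2)),
   s(V3.t i (6 * posOf φ i j - 2), V3.b i j),
   s(V3.b i j, V3.t i (6 * posOf φ i j - 3))}

/-- The edges of the cycle `Z̄_{ij}` (for a negative occurrence of `¬x_i` in clause `C_j`). -/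
def Zbedges (φ : CNF3) (i j : ℕ) : Finset (Sym2 V3) :=
  {s(V3.f i (6 * posOf φ i j - 3), V3.c1 j),
   s(V3.c1 j, V3.a i j),
   s(V3.a i j, V3.c2 j),
   s(V3.c2 j, V3.f i (6 * posOf φ i j - 2)),
   s(V3.f i (6 * posOf φ i j - 2), V3.b i j),
   s(V3.b i j, V3.f i (6 * posOf φ i j - 3))}

/-- The edge class `E_0`: all edges of all cycles `X_i`, `Y_{ii'}`, `Z_{ij}`, `Z̄_{ij}`. -/
def E0 (φ : CNF3) : Finset (Sym2 V3) :=
  ((Finset.range φ.n).biUnion fun i => Xedges φ i) ∪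
  ((Finset.range φ.n).biUnion fun i => Yedges φ i) ∪
  ((Finset.range φ.m).biUnion fun j =>
    (φ.clause j).biUnion fun p => if p.2 then Zedges φ p.1 j else Zbedges φ p.1 j)

/-- The edge class `E_i^ℓ`: the edges of the path `P_i^ℓ = (t_i^ℓ, z_i^ℓ, f_i^ℓ)`. -/
def Epl (φ : CNF3) (i l : ℕ) : Finset (Sym2 V3) :=
  {s(V3.t i l, V3.z i l), s(V3.z i l, V3.f i l)}

/-- The edge class `E*`: all edges incident to `c*`,
i.e. the edges of the paths `(c_j¹, c*, c_j²)`. -/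
def Estar (φ : CNF3) : Finset (Sym2 V3) :=
  (Finset.range φ.m).biUnion fun j => {s(V3.c1 j, V3.cs), s(V3.cs, V3.c2 j)}

/-- All edges of the constructed graph `G`. -/
def Eall (φ : CNF3) : Finset (Sym2 V3) :=
  E0 φ ∪ Estar φ ∪
  ((Finset.range φ.n).biUnion fun i => (Finset.Icc 1 (6 * μ φ i)).biUnion fun l => Epl φ i l)

/-- The vertex set `V_FT` of all vertices `t_i^ℓ` and `f_i^ℓ`. -/
def VFT (φ : CNF3) : Set V3 :=
  {v | ∃ i < φ.n, ∃ l : ℕ, 1 ≤ l ∧ l ≤ 6 * μ φ i ∧ (v = V3.t i l ∨ v = V3.f i l)}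

/-- The vertex set `V_C` of all vertices `c_j¹` and `c_j²`. -/
def VC (φ : CNF3) : Set V3 :=
  {v | ∃ j < φ.m, v = V3.c1 j ∨ v = V3.c2 j}


/-- Indices for the edge classes of the constructed instance:
`e0` for `E_0`, `pl i l` for `E_i^ℓ`, `star` for `E*`. -/
inductive CI : Type where
  | e0 : CI
  | pl (i l : ℕ) : CI
  | star : CI
deriving DecidableEq

/-- The edge class with a given index. -/
def classEdges (φ : CNF3) : CI → Finset (Sym2 V3)
  | .e0 => E0 φ
  | .pl i l => Epl φ i l
  | .star => Estar φ

/-- The class indices actually occurring in the constructed instance. -/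
def validCI (φ : CNF3) : CI → Prop
  | .e0 => True
  | .pl i l => i < φ.n ∧ 1 ≤ l ∧ l ≤ 6 * μ φ i
  | .star => True

/-- The (strict) precedence order on the classes: `E_0` precedes every `E_i^ℓ`,
the classes `E_i^ℓ` are ordered lexicographically, and `E*` is incomparable
to all other classes. -/
def prec : CI → CI → Prop
  | .e0, .pl _ _ => True
  | .pl i l, .pl i' l' => i < i' ∨ (i = i' ∧ l < l')
  | _, _ => False

/-- A list of traversed edges respects the precedence constraints: whenever the
edge traversed at step `q` belongs to a class `A`, every edge of every class
`B ≺ A` has already been traversed at some earlier step `p < q`. -/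
def PrecRespecting (φ : CNF3) (L : List (Sym2 V3)) : Prop :=
  ∀ (q : ℕ) (hq : q < L.length) (A : CI), validCI φ A → L.get ⟨q, hq⟩ ∈ classEdges φ A →
    ∀ B : CI, validCI φ B → prec B A → ∀ e ∈ classEdges φ B,
      ∃ (p : ℕ) (hp : p < L.length), p < q ∧ L.get ⟨p, hp⟩ = e

/-- A feasible solution for the constructed HCPP instance: a closed walk in `G`
traversing every edge at least once and respecting the precedence constraints. -/
def FeasibleTour (φ : CNF3) (T : List V3) : Prop :=
  T ≠ [] ∧ T.Chain' (fun a b => s(a, b) ∈ Eall φ) ∧ T.head? = T.getLast? ∧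
  (∀ e ∈ Eall φ, e ∈ walkEdges T) ∧ PrecRespecting φ (walkEdgeList T)

/-- The number `b` of imbalanced vertices of the constructed graph `G`. -/
noncomputable def imb (φ : CNF3) : ℕ := Nat.card {v : V3 // ¬ Even (mDeg (Eall φ).val v)}

/-- A tight tour: a feasible solution of weight at most `|E| + b/2`
(all edges have weight one, so the weight is the number of edge traversals). -/
def IsTightTour (φ : CNF3) (T : List V3) : Prop :=
  FeasibleTour φ T ∧
  ((Multiset.card (walkEdges T) : ℚ) ≤ (Eall φ).card + (imb φ : ℚ) / 2)

/-! ### Degrees -/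

/-- Number of ends of the edge `e` at `v`. -/
def inc (v : V) (e : Sym2 V) : ℕ :=
  if e = Sym2.diag v then 2 else if v ∈ e then 1 else 0

lemma mDeg_eq (M : Multiset (Sym2 V)) (v : V) : mDeg M v = (M.map (inc v)).sum := rfl

lemma mDeg_add (M N : Multiset (Sym2 V)) (v : V) : mDeg (M + N) v = mDeg M v + mDeg N v := by
  simp [mDeg_eq]

lemma mDeg_cons (e : Sym2 V) (N : Multiset (Sym2 V)) (v : V) :
    mDeg (e ::ₘ N) v = inc v e + mDeg N v := by
  simp [mDeg_eq]

/-- Indicator with values in `ZMod 2`. -/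
def dl (a v : V) : ZMod 2 := if v = a then 1 else 0

lemma inc_nat (a b v : V) :
    inc v s(a, b) = (if v = a then 1 else 0) + (if v = b then 1 else 0) := by
  unfold inc
  by_cases h : v = a <;> by_cases h' : v = b <;> simp [Sym2.diag, h, h'] <;> grind

lemma inc_mk (a b v : V) : ((inc v s(a, b) : ℕ) : ZMod 2) = dl a v + dl b v := by
  rw [inc_nat]
  unfold dl
  push_cast
  rfl

lemma inc_pos {v : V} {e : Sym2 V} (h : v ∈ e) : 1 ≤ inc v e := by
  unfold inc; split_ifs <;> simp

lemma inc_diag {v : V} {e : Sym2 V} (h : v ∈ e) (hd : e.IsDiag) : inc v e = 2 := by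
  induction e using Sym2.ind with
  | _ a b =>
    simp at hd h
    subst hd
    simp at h
    subst h
    simp [inc, Sym2.diag]

lemma sum_inc_le (F : Finset V) (e : Sym2 V) : ∑ v ∈ F, inc v e ≤ 2 := by
  induction e using Sym2.ind with
  | _ a b =>
    simp only [inc_nat, Finset.sum_add_distrib, Finset.sum_ite_eq']
    split_ifs <;> simp

lemma sum_mDeg_le (F : Finset V) (M : Multiset (Sym2 V)) :
    ∑ v ∈ F, mDeg M v ≤ 2 * Multiset.card M := by
  induction M using Multiset.induction with
  | empty => simp [mDeg_eq]
  | cons e N ih =>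
    simp only [mDeg_cons, Finset.sum_add_distrib, Multiset.card_cons]
    have := sum_inc_le F e
    omega

lemma mDeg_mem {M : Multiset (Sym2 V)} {v : V} {e : Sym2 V} (he : e ∈ M) :
    inc v e ≤ mDeg M v := by
  obtain ⟨N, rfl⟩ := Multiset.exists_cons_of_mem he
  simp [mDeg_cons]

lemma mDeg_mem2 {M : Multiset (Sym2 V)} {v : V} {e e' : Sym2 V} (he : {e, e'} ≤ M) 
    (h : v ∈ e) (h' : v ∈ e') : 2 ≤ mDeg M v := by
  obtain ⟨N, rfl⟩ := Multiset.le_iff_exists_add.1 he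
  have := inc_pos h
  have := inc_pos h'
  have h3 : ({e, e'} : Multiset (Sym2 V)) = e ::ₘ e' ::ₘ 0 := rfl
  rw [mDeg_add, h3, mDeg_cons, mDeg_cons]
  omega

/-- A vertex of positive degree lies on an edge. -/
lemma exists_of_mDeg_pos {M : Multiset (Sym2 V)} {v : V} (h : 1 ≤ mDeg M v) :
    ∃ e ∈ M, v ∈ e := by
  induction M using Multiset.induction with
  | empty => simp [mDeg_eq] at h
  | cons e N ih =>
    by_cases hv : v ∈ e
    · exact ⟨e, by simp, hv⟩
    · have : inc v e = 0 := by
        unfold inc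
        rw [if_neg, if_neg hv]
        rintro rfl
        simp [Sym2.diag] at hv
      rw [mDeg_cons, this, zero_add] at h
      obtain ⟨e', h1, h2⟩ := ih h
      exact ⟨e', by simp [h1], h2⟩

lemma matching_of_deg {M : Multiset (Sym2 V)} {B : Finset V} 
    (hB : ∀ v ∈ B, 1 ≤ mDeg M v) (hc : 2 * Multiset.card M ≤ B.card) :
    IsPerfectMatchingOn M (B : Set V) := by
  have key : ∀ v, mDeg M v ≤ 1 ∧ (1 ≤ mDeg M v → v ∈ B) := by
    intro v
    by_cases hv : v ∈ B
    · refine ⟨?_, fun _ => hv⟩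
      have h1 := sum_mDeg_le B M
      rw [← Finset.add_sum_erase _ _ hv] at h1
      have h2 : (B.erase v).card • 1 ≤ ∑ x ∈ B.erase v, mDeg M x :=
        Finset.card_nsmul_le_sum _ _ _ (fun x hx => hB x (Finset.mem_of_mem_erase hx))
      have h3 := Finset.card_erase_add_one hv
      simp at h2
      omega
    · have h1 := sum_mDeg_le (insert v B) M
      rw [Finset.sum_insert hv] at h1
      have h2 : B.card • 1 ≤ ∑ x ∈ B, mDeg M x :=
        Finset.card_nsmul_le_sum _ _ _ hB
      simp at h2
      constructor
      · omega
      · intro h; omega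
  refine ⟨?_, ?_, ?_, ?_⟩
  · rw [Multiset.nodup_iff_le]
    intro e he
    induction e using Sym2.ind with
    | _ a b =>
      have := mDeg_mem2 (v := a) he (by simp) (by simp)
      have := (key a).1
      omega
  · intro e he hd
    induction e using Sym2.ind with
    | _ a b =>
      have h1 := inc_diag (v := a) (by simp) hd
      have := mDeg_mem (v := a) he
      have := (key a).1
      omega
  · intro e he e' he' hne v hv hv'
    have hle : ({e, e'} : Multiset (Sym2 V)) ≤ M := by
      rw [Multiset.le_iff_subset]
      · intro x hx
        simp at hx
        rcases hx with rfl | rfl <;> assumption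
      · simpa using hne
    have := mDeg_mem2 hle hv hv'
    have := (key v).1
    omega
  · ext v
    constructor
    · rintro ⟨e, he, hv⟩
      exact (key v).2 ((inc_pos hv).trans (mDeg_mem he))
    · intro hv
      exact exists_of_mDeg_pos (hB v hv)

/-! ### Walks -/

lemma walkEdgeList_cons (a b : V) (w : List V) :
    walkEdgeList (a :: b :: w) = s(a, b) :: walkEdgeList (b :: w) := by
  simp [walkEdgeList]

lemma mDeg_walk (a : V) (w : List V) (v : V) :
    ((mDeg (walkEdges (a :: w)) v : ℕ) : ZMod 2) 
      = dl a v + dl ((a :: w).getLast (by simp)) v := by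
  have h3 : ∀ x : ZMod 2, x + x = 0 := by decide
  induction w generalizing a with
  | nil => simp [walkEdges, walkEdgeList, mDeg_eq, h3]
  | cons b w ih =>
    have : walkEdges (a :: b :: w) = s(a, b) ::ₘ walkEdges (b :: w) := by
      simp [walkEdges, walkEdgeList_cons]
    rw [this, mDeg_cons, Nat.cast_add, ih, inc_mk, List.getLast_cons (l := b :: w) (List.cons_ne_nil _ _)]
    linear_combination h3 (dl b v)

lemma mDeg_closed (T : List V) (h0 : T ≠ []) (h : T.head? = T.getLast?) (v : V) :
    Even (mDeg (walkEdges T) v) := by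
  have h3 : ∀ x : ZMod 2, x + x = 0 := by decide
  cases T with
  | nil => simp at h0
  | cons a w =>
    rw [List.getLast?_eq_getLast_of_ne_nil (by simp)] at h
    simp only [List.head?_cons, Option.some.injEq] at h
    have := mDeg_walk a w v
    rw [← h, h3] at this
    exact (ZMod.natCast_eq_zero_iff_even).1 this

lemma walkEdgeList_length (w : List V) : (walkEdgeList w).length = w.length - 1 := by
  simp [walkEdgeList]

lemma walkEdgeList_get (w : List V) (k : ℕ) (hk : k < (walkEdgeList w).length) :
    (walkEdgeList w)[k] = s(w[k]'(by simp [walkEdgeList_length] at hk; omega),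
      w[k+1]'(by simp [walkEdgeList_length] at hk; omega)) := by
  simp [walkEdgeList]

lemma mem_of_chain {S : Finset (Sym2 V)} (w : List V)
    (h : w.Chain' (fun a b => s(a, b) ∈ S)) : ∀ e ∈ walkEdges w, e ∈ S := by
  induction w with
  | nil => simp [walkEdges, walkEdgeList]
  | cons a w ih =>
    cases w with
    | nil => simp [walkEdges, walkEdgeList]
    | cons b w =>
      have h' := List.isChain_cons_cons.1 h
      intro e he
      have : walkEdges (a :: b :: w) = s(a, b) ::ₘ walkEdges (b :: w) := by
        simp [walkEdges, walkEdgeList_cons]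
      rw [this, Multiset.mem_cons] at he
      rcases he with rfl | he
      · exact h'.1
      · exact ih h'.2 e he

lemma reach_symm {R : Multiset (Sym2 V)} {a b : V} (h : Relation.ReflTransGen (mAdj R) a b) :
    Relation.ReflTransGen (mAdj R) b a := by
  induction h with
  | refl => exact .refl
  | tail _ h ih =>
    refine .head ?_ ih
    unfold mAdj at *
    rwa [Sym2.eq_swap]

lemma reach_edge {R : Multiset (Sym2 V)} {a b : V} {e : Sym2 V} (he : e ∈ R) (ha : a ∈ e)
    (hb : b ∈ e) : Relation.ReflTransGen (mAdj R) a b := by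
  by_cases h : a = b
  · subst h; exact .refl
  · have : e = s(a, b) := ((Sym2.mem_and_mem_iff h).1 ⟨ha, hb⟩)
    subst this
    exact .single he

lemma walk_reach {R : Multiset (Sym2 V)} (w : List V) (q : ℕ)
    (hR : ∀ k (hk : k < (walkEdgeList w).length), q ≤ k → (walkEdgeList w)[k] ∈ R)
    (k : ℕ) (hk : k < (walkEdgeList w).length) (hq : q ≤ k) (x : V)
    (hx : x ∈ (walkEdgeList w)[k]) :
    Relation.ReflTransGen (mAdj R) (w[q]'(by simp [walkEdgeList_length] at hk; omega)) x := by
  induction k, hq using Nat.le_induction generalizing x with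
  | base =>
    refine reach_edge (hR q hk le_rfl) ?_ hx
    rw [walkEdgeList_get]; simp
  | succ k hqk ih =>
    have h1 := ih (by omega) (w[k+1]'(by simp [walkEdgeList_length] at hk; omega))
      (by rw [walkEdgeList_get]; simp)
    refine h1.trans (reach_edge (hR (k+1) hk (by omega)) ?_ hx)
    rw [walkEdgeList_get]; simp

/-! ### Parities of the degrees of the constructed graph -/

/-- Degree parity of a finite set of edges. -/
def bd (S : Finset (Sym2 V3)) (v : V3) : ZMod 2 := ∑ e ∈ S, ((inc v e : ℕ) : ZMod 2)

lemma bd_union {S S' : Finset (Sym2 V3)} (h : Disjoint S S') (v : V3) :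
    bd (S ∪ S') v = bd S v + bd S' v := Finset.sum_union h

lemma bd_biUnion {ι : Type} [DecidableEq ι] {s : Finset ι} {F : ι → Finset (Sym2 V3)}
    (h : ∀ i ∈ s, ∀ j ∈ s, i ≠ j → Disjoint (F i) (F j)) (v : V3) :
    bd (s.biUnion F) v = ∑ i ∈ s, bd (F i) v := 
  Finset.sum_biUnion (fun i hi j hj hij => h i hi j hj hij)

lemma mDeg_bd (S : Finset (Sym2 V3)) (v : V3) : ((mDeg S.val v : ℕ) : ZMod 2) = bd S v := by
  unfold bd
  rw [mDeg_eq, ← Nat.cast_sum]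
  rfl

lemma zz (x : ZMod 2) : x + x = 0 := by revert x; decide

lemma posOf_bounds {φ : CNF3} {j : ℕ} (hj : j < φ.m) {i : ℕ} {s : Bool}
    (h : (i, s) ∈ φ.clause j) : 1 ≤ posOf φ i j ∧ posOf φ i j ≤ μ φ i := by
  constructor
  · unfold posOf
    apply Finset.card_pos.2
    refine ⟨j, ?_⟩
    simp [occ, hj]
    cases s <;> simp [h]
  · exact Finset.card_filter_le _ _

lemma telescope (g : ℕ → ZMod 2) (N : ℕ) (hN : 1 ≤ N) :
    ∑ l ∈ Finset.Ico 1 N, (g l + g (l + 1)) = g 1 + g N := by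
  induction N, hN using Nat.le_induction with
  | base => simp [zz]
  | succ n hn ih =>
    rw [Finset.sum_Ico_succ_top hn, ih]
    linear_combination zz (g n)

lemma bd_X {φ : CNF3} {i : ℕ} (h : 1 ≤ μ φ i) (v : V3) : bd (Xedges φ i) v = 0 := by
  unfold Xedges
  rw [bd_union, bd_union]
  · unfold bd
    rw [Finset.sum_image, Finset.sum_image, Finset.sum_pair]
    · simp only [inc_mk]
      rw [telescope (fun l => dl (V3.t i l) v) _ (by omega),
        telescope (fun l => dl (V3.f i l) v) _ (by omega)]
      linear_combination zz (dl (V3.t i 1) v) + zz (dl (V3.f i 1) v)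
        + zz (dl (V3.t i (6 * μ φ i)) v) + zz (dl (V3.f i (6 * μ φ i)) v)
    · simp <;> omega
    · intro a _ b _; simp; omega
    · intro a _ b _; simp; omega
  · rw [Finset.disjoint_left]; intro e; simp; rintro l h1 h2 rfl; simp
  · rw [Finset.disjoint_left]; intro e; simp
    rintro (⟨l, h1, rfl⟩ | ⟨l, h1, rfl⟩) <;> simp

lemma bd_four {a b c d : Sym2 V3} (h : [a, b, c, d].Nodup) (v : V3) :
    bd {a, b, c, d} v = inc v a + inc v b + inc v c + inc v d := by
  have : ({a, b, c, d} : Finset (Sym2 V3)) = [a, b, c, d].toFinset := by ext; simp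
  unfold bd
  rw [this, List.sum_toFinset _ h]
  simp; ring

lemma bd_six {a b c d e f : Sym2 V3} (h : [a, b, c, d, e, f].Nodup) (v : V3) :
    bd {a, b, c, d, e, f} v 
      = inc v a + inc v b + inc v c + inc v d + inc v e + inc v f := by
  have : ({a, b, c, d, e, f} : Finset (Sym2 V3)) = [a, b, c, d, e, f].toFinset := by ext; simp
  unfold bd
  rw [this, List.sum_toFinset _ h]
  simp; ring

lemma bd_Y {φ : CNF3} {i : ℕ} (h : 1 ≤ μ φ i) (v : V3) : bd (Yedges φ i) v = 0 := by
  unfold Yedges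
  rw [bd_four]
  · simp only [inc_mk]
    linear_combination zz (dl (V3.t i (6 * μ φ i)) v) + zz (dl (V3.f i (6 * μ φ i)) v)
      + zz (dl (V3.t ((i + 1) % φ.n) 1) v) + zz (dl (V3.f ((i + 1) % φ.n) 1) v)
  · simp <;> omega

lemma bd_Z {φ : CNF3} {i j : ℕ} (h : 1 ≤ posOf φ i j) (v : V3) : bd (Zedges φ i j) v = 0 := by
  unfold Zedges
  rw [bd_six]
  · simp only [inc_mk]
    linear_combination zz (dl (V3.t i (6 * posOf φ i j - 3)) v)
      + zz (dl (V3.t i (6 * posOf φ i j - 2)) v)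
      + zz (dl (V3.c1 j) v) + zz (dl (V3.c2 j) v) + zz (dl (V3.a i j) v) + zz (dl (V3.b i j) v)
  · simp; omega

lemma bd_Zb {φ : CNF3} {i j : ℕ} (h : 1 ≤ posOf φ i j) (v : V3) : bd (Zbedges φ i j) v = 0 := by
  unfold Zbedges
  rw [bd_six]
  · simp only [inc_mk]
    linear_combination zz (dl (V3.f i (6 * posOf φ i j - 3)) v)
      + zz (dl (V3.f i (6 * posOf φ i j - 2)) v)
      + zz (dl (V3.c1 j) v) + zz (dl (V3.c2 j) v) + zz (dl (V3.a i j) v) + zz (dl (V3.b i j) v)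
  · simp; omega

/-- Edges between two vertices of `t`/`f` type. -/
def isTF : V3 → Prop
  | .t _ _ => True
  | .f _ _ => True
  | _ => False

lemma X_tf {φ : CNF3} {i : ℕ} {e : Sym2 V3} (he : e ∈ Xedges φ i) : ∀ v ∈ e, isTF v := by
  simp [Xedges] at he
  rcases he with (rfl | rfl | ⟨l, _, rfl⟩ | ⟨l, _, rfl⟩) <;> simp [isTF]

lemma Y_tf {φ : CNF3} {i : ℕ} {e : Sym2 V3} (he : e ∈ Yedges φ i) : ∀ v ∈ e, isTF v := by
  simp [Yedges] at he
  rcases he with (rfl | rfl | rfl | rfl) <;> simp [isTF]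

/-- The cycle of a literal occurrence. -/
def ZZ (φ : CNF3) (j : ℕ) (p : ℕ × Bool) : Finset (Sym2 V3) :=
  if p.2 then Zedges φ p.1 j else Zbedges φ p.1 j

lemma ZZ_key {φ : CNF3} {j : ℕ} {p : ℕ × Bool} {e : Sym2 V3} (he : e ∈ ZZ φ j p) :
    (∃ l, (e = s(V3.t p.1 l, V3.c1 j) ∨ e = s(V3.c2 j, V3.t p.1 l)
      ∨ e = s(V3.t p.1 l, V3.b p.1 j) ∨ 
      e = s(V3.f p.1 l, V3.c1 j) ∨ e = s(V3.c2 j, V3.f p.1 l)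
      ∨ e = s(V3.f p.1 l, V3.b p.1 j))) ∨ e = s(V3.c1 j, V3.a p.1 j) ∨ 
      e = s(V3.a p.1 j, V3.c2 j) := by
  obtain ⟨i, s⟩ := p
  cases s <;> simp [ZZ, Zedges, Zbedges] at he <;>
    rcases he with (rfl | rfl | rfl | rfl | rfl | rfl) <;> simp

lemma ZZ_not_tf {φ : CNF3} {j : ℕ} {p : ℕ × Bool} {e : Sym2 V3} (he : e ∈ ZZ φ j p) :
    ¬ ∀ v ∈ e, isTF v := by
  rcases ZZ_key he with ⟨l, (rfl | rfl | rfl | rfl | rfl | rfl)⟩ | rfl | rfl <;> simp [isTF]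

lemma ZZ_disj {φ : CNF3} {j j' : ℕ} {p p' : ℕ × Bool} {e : Sym2 V3} (he : e ∈ ZZ φ j p)
    (he' : e ∈ ZZ φ j' p') : j = j' ∧ p.1 = p'.1 := by
  rcases ZZ_key he with ⟨l, (rfl | rfl | rfl | rfl | rfl | rfl)⟩ | rfl | rfl <;>
  · have := ZZ_key he'
    simp at this
    grind

lemma X_disj {φ : CNF3} {i i' : ℕ} {e : Sym2 V3} (he : e ∈ Xedges φ i)
    (he' : e ∈ Xedges φ i') : i = i' := by
  simp [Xedges] at he
  rcases he with (rfl | rfl | ⟨l, _, rfl⟩ | ⟨l, _, rfl⟩) <;>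
  · simp [Xedges] at he'
    grind

lemma Y_disj {φ : CNF3} {i i' : ℕ} (h : 1 ≤ μ φ i) (h' : 1 ≤ μ φ i') {e : Sym2 V3}
    (he : e ∈ Yedges φ i) (he' : e ∈ Yedges φ i') : i = i' := by
  simp [Yedges] at he
  rcases he with (rfl | rfl | rfl | rfl) <;>
  · simp [Yedges] at he'
    omega

lemma XY_disj {φ : CNF3} {i i' : ℕ} (h : 1 ≤ μ φ i) (h' : 1 ≤ μ φ i') {e : Sym2 V3}
    (he : e ∈ Xedges φ i) (he' : e ∈ Yedges φ i') : False := by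
  simp [Yedges] at he'
  rcases he' with (rfl | rfl | rfl | rfl) <;>
  · simp [Xedges] at he
    grind

lemma E0_eq (φ : CNF3) : E0 φ = ((Finset.range φ.n).biUnion fun i => Xedges φ i) ∪
  ((Finset.range φ.n).biUnion fun i => Yedges φ i) ∪
  ((Finset.range φ.m).biUnion fun j => (φ.clause j).biUnion fun p => ZZ φ j p) := rfl

lemma mem_E0 {φ : CNF3} {e : Sym2 V3} : e ∈ E0 φ ↔ (∃ i < φ.n, e ∈ Xedges φ i) ∨
    (∃ i < φ.n, e ∈ Yedges φ i) ∨ ∃ j < φ.m, ∃ p ∈ φ.clause j, e ∈ ZZ φ j p := by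
  rw [E0_eq]
  simp [Finset.mem_union, Finset.mem_biUnion, or_assoc]

lemma bd_E0 {φ : CNF3} (hμ : ∀ i < φ.n, 1 ≤ μ φ i) (v : V3) : bd (E0 φ) v = 0 := by
  rw [E0_eq, bd_union, bd_union, bd_biUnion, bd_biUnion, bd_biUnion, Finset.sum_eq_zero,
    Finset.sum_eq_zero, Finset.sum_eq_zero]
  · simp
  · intro j hj
    rw [bd_biUnion, Finset.sum_eq_zero]
    · rintro ⟨i, s⟩ hp
      have := posOf_bounds (Finset.mem_range.1 hj) hp
      cases s
      · simpa [ZZ] using bd_Zb this.1 v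
      · simpa [ZZ] using bd_Z this.1 v
    · rintro ⟨i, s⟩ hp ⟨i', s'⟩ hp' hne
      rw [Finset.disjoint_left]
      intro e he he'
      have h1 := (ZZ_disj he he').2
      simp at h1
      subst h1
      have := φ.no_taut j (Finset.mem_range.1 hj) i
      cases s <;> cases s' <;> simp_all
  · intro i hi; exact bd_Y (hμ i (Finset.mem_range.1 hi)) v
  · intro i hi; exact bd_X (hμ i (Finset.mem_range.1 hi)) v
  · intro j hj j' hj' hne
    rw [Finset.disjoint_left]
    intro e he he'
    simp only [Finset.mem_biUnion] at he he'
    obtain ⟨p, _, he⟩ := he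
    obtain ⟨p', _, he'⟩ := he'
    exact hne (ZZ_disj he he').1
  · intro j hj j' hj' hne
    rw [Finset.disjoint_left]
    intro e he he'
    exact hne (Y_disj (hμ _ (Finset.mem_range.1 hj)) (hμ _ (Finset.mem_range.1 hj')) he he')
  · intro j hj j' hj' hne
    rw [Finset.disjoint_left]
    intro e he he'
    exact hne (X_disj he he')
  · rw [Finset.disjoint_left]
    intro e he he'
    simp only [Finset.mem_biUnion, Finset.mem_range] at he he'
    obtain ⟨i, hi, he⟩ := he
    obtain ⟨i', hi', he'⟩ := he'
    exact XY_disj (hμ _ hi) (hμ _ hi') he he'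
  · rw [Finset.disjoint_left]
    intro e he he'
    simp only [Finset.mem_biUnion, Finset.mem_union, Finset.mem_range] at he he'
    obtain ⟨j, hj, p, hp, he'⟩ := he'
    rcases he with ⟨i, hi, he⟩ | ⟨i, hi, he⟩
    · exact ZZ_not_tf he' (X_tf he)
    · exact ZZ_not_tf he' (Y_tf he)

lemma E0_no {φ : CNF3} {e : Sym2 V3} (he : e ∈ E0 φ) : V3.cs ∉ e ∧ ∀ i l, V3.z i l ∉ e := by
  rw [mem_E0] at he
  rcases he with ⟨i, hi, he⟩ | ⟨i, hi, he⟩ | ⟨j, hj, p, hp, he⟩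
  · exact ⟨fun h => X_tf he _ h, fun i l h => X_tf he _ h⟩
  · exact ⟨fun h => Y_tf he _ h, fun i l h => Y_tf he _ h⟩
  · rcases ZZ_key he with ⟨l, (rfl | rfl | rfl | rfl | rfl | rfl)⟩ | rfl | rfl <;> simp

/-- Union of all path classes. -/
def PP (φ : CNF3) : Finset (Sym2 V3) :=
  (Finset.range φ.n).biUnion fun i => (Finset.Icc 1 (6 * μ φ i)).biUnion fun l => Epl φ i l

lemma Eall_eq (φ : CNF3) : Eall φ = E0 φ ∪ Estar φ ∪ PP φ := rfl

lemma mem_PP {φ : CNF3} {e : Sym2 V3} : e ∈ PP φ ↔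
    ∃ i < φ.n, ∃ l, (1 ≤ l ∧ l ≤ 6 * μ φ i) ∧ e ∈ Epl φ i l := by
  simp [PP]

lemma mem_Estar {φ : CNF3} {e : Sym2 V3} : e ∈ Estar φ ↔
    ∃ j < φ.m, (e = s(V3.c1 j, V3.cs) ∨ e = s(V3.cs, V3.c2 j)) := by
  simp [Estar]

lemma PP_z {φ : CNF3} {e : Sym2 V3} (he : e ∈ PP φ) : ∃ i l, V3.z i l ∈ e := by
  obtain ⟨i, hi, l, hl, he⟩ := mem_PP.1 he
  simp [Epl] at he
  refine ⟨i, l, ?_⟩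
  rcases he with rfl | rfl <;> simp

lemma Estar_cs {φ : CNF3} {e : Sym2 V3} (he : e ∈ Estar φ) : V3.cs ∈ e := by
  obtain ⟨j, hj, rfl | rfl⟩ := mem_Estar.1 he <;> simp

lemma PP_cs {φ : CNF3} {e : Sym2 V3} (he : e ∈ PP φ) : V3.cs ∉ e := by
  obtain ⟨i, hi, l, hl, he⟩ := mem_PP.1 he
  simp [Epl] at he
  rcases he with rfl | rfl <;> simp

lemma bd_Epl {φ : CNF3} (i l : ℕ) (v : V3) :
    bd (Epl φ i l) v = dl (V3.t i l) v + dl (V3.f i l) v := by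
  unfold Epl bd
  rw [Finset.sum_pair (by simp)]
  simp only [inc_mk]
  linear_combination zz (dl (V3.z i l) v)

lemma bd_PP {φ : CNF3} (v : V3) : bd (PP φ) v =
    ∑ i ∈ Finset.range φ.n, ∑ l ∈ Finset.Icc 1 (6 * μ φ i),
      (dl (V3.t i l) v + dl (V3.f i l) v) := by
  unfold PP
  rw [bd_biUnion]
  · refine Finset.sum_congr rfl fun i _ => ?_
    rw [bd_biUnion]
    · exact Finset.sum_congr rfl fun l _ => bd_Epl i l v
    · intro l _ l' _ hne
      rw [Finset.disjoint_left]
      intro e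
      simp only [Epl, Finset.mem_insert, Finset.mem_singleton]
      rintro (rfl | rfl) <;> simp [hne]
  · intro i _ i' _ hne
    rw [Finset.disjoint_left]
    intro e
    simp only [Epl, Finset.mem_insert, Finset.mem_singleton, Finset.mem_biUnion]
    rintro ⟨l, _, (rfl | rfl)⟩ <;> simp [hne]

lemma bd_Estar {φ : CNF3} (v : V3) : bd (Estar φ) v =
    ∑ j ∈ Finset.range φ.m, (dl (V3.c1 j) v + dl (V3.c2 j) v) := by
  unfold Estar
  rw [bd_biUnion]
  · refine Finset.sum_congr rfl fun j _ => ?_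
    unfold bd
    rw [Finset.sum_pair (by simp)]
    simp only [inc_mk]
    linear_combination zz (dl V3.cs v)
  · intro i _ i' _ hne
    rw [Finset.disjoint_left]
    intro e
    simp only [Finset.mem_insert, Finset.mem_singleton]
    rintro (rfl | rfl) <;> simp [hne]

/-- The set `V_FT ∪ V_C` as a finite set. -/
def BB (φ : CNF3) : Finset V3 :=
  ((Finset.range φ.n).biUnion fun i => (Finset.Icc 1 (6 * μ φ i)).biUnion fun l =>
    {V3.t i l, V3.f i l}) ∪ (Finset.range φ.m).biUnion fun j => {V3.c1 j, V3.c2 j}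

lemma coe_BB (φ : CNF3) : (BB φ : Set V3) = VFT φ ∪ VC φ := by
  ext v
  simp only [BB, VFT, VC, Finset.coe_union, Set.mem_union, Finset.mem_coe, Finset.mem_biUnion,
    Finset.mem_range, Finset.mem_Icc, Finset.mem_insert, Finset.mem_singleton, Set.mem_setOf_eq,
    and_assoc]

lemma bd_Eall {φ : CNF3} (hμ : ∀ i < φ.n, 1 ≤ μ φ i) (v : V3) :
    bd (Eall φ) v = if v ∈ BB φ then 1 else 0 := by
  rw [Eall_eq, bd_union, bd_union, bd_E0 hμ, bd_PP, bd_Estar]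
  · cases v <;> simp [dl, BB, Finset.sum_add_distrib, Finset.sum_ite_eq, ite_and]
  · rw [Finset.disjoint_left]
    intro e he he'
    exact (E0_no he).1 (Estar_cs he')
  · rw [Finset.disjoint_left]
    intro e he he'
    rw [Finset.mem_union] at he
    rcases he with he | he
    · obtain ⟨i, l, h⟩ := PP_z he'
      exact (E0_no he).2 i l h
    · exact PP_cs he' (Estar_cs he)

lemma odd_iff {φ : CNF3} (hμ : ∀ i < φ.n, 1 ≤ μ φ i) (v : V3) :
    ¬ Even (mDeg (Eall φ).val v) ↔ v ∈ BB φ := by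
  rw [← ZMod.natCast_eq_zero_iff_even, mDeg_bd, bd_Eall hμ]
  split_ifs with h <;> simp [h]

lemma imb_eq {φ : CNF3} (hμ : ∀ i < φ.n, 1 ≤ μ φ i) : imb φ = (BB φ).card := by
  unfold imb
  simp only [odd_iff hμ]
  simp

/-- An edge of `E_0` between vertices of `V_FT ∪ V_C` meets `V_FT`. -/
lemma E0_meets {φ : CNF3} {e : Sym2 V3} (he : e ∈ E0 φ) (h : ∀ v ∈ e, v ∈ VFT φ ∪ VC φ) :
    ∃ v ∈ e, v ∈ VFT φ := by
  have aux : ∀ v ∈ e, isTF v → ∃ v ∈ e, v ∈ VFT φ := by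
    intro v hv ht
    refine ⟨v, hv, ?_⟩
    rcases h v hv with h | ⟨j, _, rfl | rfl⟩
    · exact h
    · exact ht.elim
    · exact ht.elim
  have ha : ∀ i j, V3.a i j ∉ e := by
    intro i j hv
    have := h _ hv
    simp [VFT, VC] at this
  rw [mem_E0] at he
  rcases he with ⟨i, hi, he⟩ | ⟨i, hi, he⟩ | ⟨j, hj, p, hp, he⟩
  · obtain ⟨v, hv⟩ : ∃ v, v ∈ e := ⟨_, e.out_fst_mem⟩
    exact aux v hv (X_tf he v hv)
  · obtain ⟨v, hv⟩ : ∃ v, v ∈ e := ⟨_, e.out_fst_mem⟩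
    exact aux v hv (Y_tf he v hv)
  · rcases ZZ_key he with ⟨l, (rfl | rfl | rfl | rfl | rfl | rfl)⟩ | rfl | rfl
    all_goals first
      | exact aux (V3.t p.1 l) (Sym2.mem_mk_left _ _) trivial
      | exact aux (V3.t p.1 l) (Sym2.mem_mk_right _ _) trivial
      | exact aux (V3.f p.1 l) (Sym2.mem_mk_left _ _) trivial
      | exact aux (V3.f p.1 l) (Sym2.mem_mk_right _ _) trivial
      | exact (ha p.1 j (by simp)).elim

/-- Every vertex of `V_FT` lies on a path edge. -/
lemma VFT_edge {φ : CNF3} {x : V3} (hx : x ∈ VFT φ) : ∃ e ∈ PP φ, x ∈ e := by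
  obtain ⟨i, hi, l, h1, h2, rfl | rfl⟩ := hx
  · exact ⟨s(V3.t i l, V3.z i l), mem_PP.2 ⟨i, hi, l, ⟨h1, h2⟩, by simp [Epl]⟩, by simp⟩
  · exact ⟨s(V3.z i l, V3.f i l), mem_PP.2 ⟨i, hi, l, ⟨h1, h2⟩, by simp [Epl]⟩, by simp⟩

lemma VFT_conn {φ : CNF3} {T : List V3} (hT : FeasibleTour φ T)
    {R : Multiset (Sym2 V3)} (hR : walkEdges T = (E0 φ).val + R)
    {x y : V3} (hx : x ∈ VFT φ) (hy : y ∈ VFT φ) : Relation.ReflTransGen (mAdj R) x y := by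
  classical
  obtain ⟨_, _, _, hall, hprec⟩ := hT
  set L := walkEdgeList T with hL
  have getP : ∀ x ∈ VFT φ, ∃ (k : ℕ) (hk : k < L.length), L[k] ∈ PP φ ∧ x ∈ L[k] := by
    intro x hx
    obtain ⟨e, he, hxe⟩ := VFT_edge hx
    have : e ∈ L := by
      have := hall e (by rw [Eall_eq]; simp [he])
      simpa [walkEdges] using this
    obtain ⟨k, hk, rfl⟩ := List.getElem_of_mem this
    exact ⟨k, hk, he, hxe⟩
  have hex : ∃ k, ∃ hk : k < L.length, L[k] ∈ PP φ := by
    obtain ⟨k, hk, h, _⟩ := getP x hx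
    exact ⟨k, hk, h⟩
  obtain ⟨hq, hqP⟩ := Nat.find_spec hex
  have hmin : ∀ k (hk : k < L.length), L[k] ∈ PP φ → Nat.find hex ≤ k := 
    fun k hk h => Nat.find_min' hex ⟨hk, h⟩
  generalize Nat.find hex = q at hq hqP hmin
  have hE0 : (E0 φ).val ≤ (L.take q : Multiset (Sym2 V3)) := by
    rw [Multiset.le_iff_subset (E0 φ).nodup]
    intro e he
    obtain ⟨i, hi, l, hl, hm⟩ := mem_PP.1 hqP
    obtain ⟨p, hp, hpq, rfl⟩ := hprec q hq (.pl i l) ⟨hi, hl.1, hl.2⟩ hm .e0 trivial trivial e he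
    rw [Multiset.mem_coe, List.mem_take_iff_getElem]
    exact ⟨p, by omega, rfl⟩
  have hdrop : (L.drop q : Multiset (Sym2 V3)) ≤ R := by
    have h1 : (L : Multiset (Sym2 V3)) = (L.take q : Multiset (Sym2 V3)) + L.drop q := by
      rw [Multiset.coe_add, List.take_append_drop]
    have h2 : (L : Multiset (Sym2 V3)) = (E0 φ).val + R := hR
    rw [h1] at h2
    have h3 : (E0 φ).val + (L.drop q : Multiset (Sym2 V3)) ≤ (E0 φ).val + R := by
      rw [← h2]; exact add_le_add_left hE0 _
    exact (Multiset.add_le_add_iff_left).1 h3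
  have hRk : ∀ k (hk : k < L.length), q ≤ k → L[k] ∈ R := by
    intro k hk hqk
    refine Multiset.mem_of_le hdrop ?_
    rw [Multiset.mem_coe, List.mem_drop_iff_getElem]
    exact ⟨k - q, by omega, by congr 1; omega⟩
  obtain ⟨k, hk, hkP, hxk⟩ := getP x hx
  obtain ⟨k', hk', hkP', hyk⟩ := getP y hy
  exact (reach_symm (walk_reach T q hRk k hk (hmin k hk hkP) x hxk)).trans
    (walk_reach T q hRk k' hk' (hmin k' hk' hkP') y hyk)

/-- Let `T` be a tight tour for the HCPP instance `I_φ` produced by the construction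
from a 3-CNF formula `φ` (in which every variable occurs in some clause), and let
`M = E(T) \ E` be the multiset of edges that `T` traverses additionally to `E`
(with the multiplicity of additional traversals). Then:
(i) `M ⊆ E_0` and `M` is a perfect matching on the vertex set `V_FT ∪ V_C`
(in particular `M` contains each edge at most once);
(ii) each edge in `M` has at least one endpoint in `V_FT`; and
(iii) the multigraph `⟨G⟩((E \ E_0) ∪ M)` is connected. -/
theorem tight_tour_extra_edges (φ : CNF3) (hμ : ∀ i < φ.n, 1 ≤ μ φ i)
    (T : List V3) (hT : IsTightTour φ T)
    (M : Multiset (Sym2 V3)) (hM : M = walkEdges T - (Eall φ).val) :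
    (∀ e ∈ M, e ∈ E0 φ) ∧
    IsPerfectMatchingOn M (VFT φ ∪ VC φ) ∧
    (∀ e ∈ M, ∃ v ∈ e, v ∈ VFT φ) ∧
    mConnected ((Eall φ \ E0 φ).val + M) := by
  obtain ⟨hF, hw⟩ := hT
  have hF' := hF
  obtain ⟨hne, hch, hcl, hall, _⟩ := hF'
  have hle : (Eall φ).val ≤ walkEdges T := by
    rw [Multiset.le_iff_subset (Eall φ).nodup]
    exact hall
  have hsum : walkEdges T = (Eall φ).val + M := by
    rw [hM, add_tsub_cancel_of_le hle]
  have hdeg : ∀ v ∈ BB φ, 1 ≤ mDeg M v := by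
    intro v hv
    have h1 := (odd_iff hμ v).2 hv
    have h2 := mDeg_closed T hne hcl v
    rw [hsum, mDeg_add] at h2
    by_contra h
    have h0 : mDeg M v = 0 := by omega
    rw [h0, add_zero] at h2
    exact h1 h2
  have hcard : 2 * Multiset.card M ≤ (BB φ).card := by
    rw [hsum, Multiset.card_add, imb_eq hμ, Finset.card_val] at hw
    push_cast at hw
    have : (2 * Multiset.card M : ℚ) ≤ (BB φ).card := by linarith
    exact_mod_cast this
  have hPM := matching_of_deg hdeg hcard
  rw [coe_BB] at hPM
  have hverts : ∀ e ∈ M, ∀ v ∈ e, v ∈ VFT φ ∪ VC φ := by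
    intro e he v hv
    rw [← hPM.2.2.2]
    exact ⟨e, he, hv⟩
  have hE0 : ∀ e ∈ M, e ∈ E0 φ := by
    intro e he
    have h1 : e ∈ Eall φ := mem_of_chain T hch e (by rw [hsum]; simp [he])
    rw [Eall_eq, Finset.mem_union, Finset.mem_union] at h1
    rcases h1 with (h1 | h1) | h1
    · exact h1
    · have := hverts e he _ (Estar_cs h1)
      simp [VFT, VC] at this
    · obtain ⟨i, l, h⟩ := PP_z h1
      have := hverts e he _ h
      simp [VFT, VC] at this
  have hmeet : ∀ e ∈ M, ∃ v ∈ e, v ∈ VFT φ := fun e he => E0_meets (hE0 e he) (hverts e he)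
  refine ⟨hE0, hPM, hmeet, ?_⟩
  have hsplit : walkEdges T = (E0 φ).val + ((Eall φ \ E0 φ).val + M) := by
    rw [hsum, ← add_assoc]
    congr 1
    rw [Finset.sdiff_val, add_tsub_cancel_of_le]
    rw [Finset.val_le_iff, Eall_eq, Finset.union_assoc]
    exact Finset.subset_union_left
  have hVM : ∀ v ∈ VFT φ ∪ VC φ, ∃ x ∈ VFT φ,
      Relation.ReflTransGen (mAdj ((Eall φ \ E0 φ).val + M)) v x := by
    intro v hv
    rw [← hPM.2.2.2] at hv
    obtain ⟨e, he, hve⟩ := hv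
    obtain ⟨x, hxe, hx⟩ := hmeet e he
    exact ⟨x, hx, reach_edge (Multiset.mem_add.2 (Or.inr he)) hve hxe⟩
  have hedge : ∀ e ∈ (Eall φ \ E0 φ).val + M, ∃ w ∈ e, w ∈ VFT φ ∪ VC φ := by
    intro e he
    rcases Multiset.mem_add.1 he with he | he
    · rw [Finset.mem_val, Finset.mem_sdiff, Eall_eq, Finset.mem_union, Finset.mem_union] at he
      rcases he with ⟨(h | h) | h, h0⟩
      · exact (h0 h).elim
      · obtain ⟨j, hj, rfl | rfl⟩ := mem_Estar.1 h
        · exact ⟨V3.c1 j, by simp, Or.inr ⟨j, hj, Or.inl rfl⟩⟩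
        · exact ⟨V3.c2 j, by simp, Or.inr ⟨j, hj, Or.inr rfl⟩⟩
      · obtain ⟨i, hi, l, hl, h⟩ := mem_PP.1 h
        simp [Epl] at h
        rcases h with rfl | rfl
        · exact ⟨V3.t i l, by simp, Or.inl ⟨i, hi, l, hl.1, hl.2, Or.inl rfl⟩⟩
        · exact ⟨V3.f i l, by simp, Or.inl ⟨i, hi, l, hl.1, hl.2, Or.inr rfl⟩⟩
    · obtain ⟨x, hxe, hx⟩ := hmeet e he
      exact ⟨x, hxe, Or.inl hx⟩
  have hto : ∀ u ∈ mVerts ((Eall φ \ E0 φ).val + M), ∃ x ∈ VFT φ,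
      Relation.ReflTransGen (mAdj ((Eall φ \ E0 φ).val + M)) u x := by
    rintro u ⟨e, he, hu⟩
    obtain ⟨w, hwe, hw⟩ := hedge e he
    obtain ⟨x, hx, hr⟩ := hVM w hw
    exact ⟨x, hx, (reach_edge he hu hwe).trans hr⟩
  intro u hu v hv
  obtain ⟨x, hx, hux⟩ := hto u hu
  obtain ⟨y, hy, hvy⟩ := hto v hv
  exact (hux.trans (VFT_conn hF hsplit hx hy)).trans (reach_symm hvy)

end HCPPFormal
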